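/- Let k be a field with char(k) ≠ 2 and char(k) ≠ 3, let E be a finite-dimensional unital associative k-algebra with a k-linear involution e ↦ ē, let W be a finite-dimensional unital left E-module, and let h : W × W → E be a k-bilinear hermitian form (h(α·v, β·w) = α·h(v,w)·β̄ and the involute of h(v,w) equals h(w,v) for all v,w ∈ W and α,β ∈ E). Let A := E ⊕ W be the hermitian structurable algebra with involution (e,w) ↦ (ē, w) and multiplication (e₁,w₁)·(e₂,w₂) := (e₁e₂ + h(w₂,w₁), e₂·w₁ + ē₁·w₂). Then every nonzero element of A is conjugate invertible (i.e. A is a structurable division algebra) if and only if E is a division algebra (every nonzero element of E is invertible) and for every 0 ≠ w ∈ W one has h(w,w) ≠ 0 and h(w,w) ≠ 1. -/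

import Mathlib

/-- The multiplication of the hermitian structurable algebra `A = E ⊕ W`:
`(e₁,w₁)·(e₂,w₂) := (e₁e₂ + h(w₂,w₁), e₂·w₁ + ē₁·w₂)`. -/
def hermMul {E W : Type*} [Ring E] [AddCommGroup W] [Module E W]
    (barE : E → E) (h : W → W → E) (p q : E × W) : E × W :=
  (p.1 * q.1 + h q.2 p.2, q.1 • p.2 + barE p.1 • q.2)

/-- The involution of the hermitian structurable algebra: `(e,w)‾ := (ē, w)`. -/
def hermInv {E W : Type*} (barE : E → E) (p : E × W) : E × W :=
  (barE p.1, p.2)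

/-- The triple product `V_{x,y}z := (x·ȳ)·z + (z·ȳ)·x − (z·x̄)·y` of the hermitian
structurable algebra `A = E ⊕ W`. -/
def hermTrip {E W : Type*} [Ring E] [AddCommGroup W] [Module E W]
    (barE : E → E) (h : W → W → E) (x y z : E × W) : E × W :=
  hermMul barE h (hermMul barE h x (hermInv barE y)) z
    + hermMul barE h (hermMul barE h z (hermInv barE y)) x
    - hermMul barE h (hermMul barE h z (hermInv barE x)) y

/-!
Write `q(a, u) = a ā - h(u, u)`. If `q(a, u)` is a unit of `E`, then `q(a, u)⁻¹ • (a, -u)` is a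
conjugate inverse of `(a, u)`; and over a division algebra `q(a, u) = 0` with `(a, u) ≠ 0` yields a
nonzero vector `w` with `h(w, w)` equal to `0` (namely `u`, when `a = 0`) or `1` (namely `a⁻¹ • u`).

Conversely, suppose `(b, v)` is a conjugate inverse of `(a, 0)`, and put `x = b̄ a - ā b`. Then
`x̄ = -x`, `a b̄ = 1 - x`, and `x` is central. Computing `b ā b b̄` in two ways gives
`3x b b̄ = 0`, while `a ā b b̄ = (1 - x) (1 - 2x)`; hence `x (1 - x) (1 - 2x) = 0`, and comparing
this cubic equation with its image under the involution gives `6x² = 0`. Thus `x = 0` and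
`a b̄ = 1`. The conjugate inverses of `(0, u)` and `(1, u)` exclude the values `0` and `1` of
`h(u, u)`.
-/

section StarRing

variable {E : Type*} [Ring E] [StarRing E]

theorem eq_zero_of_star_eq_neg_of_cubic_eq_zero (h2 : IsLeftRegular (2 : E))
    (h3 : IsLeftRegular (3 : E)) {x : E} (hstar : star x = -x)
    (hcubic : x * (1 - x) * (1 - 2 * x) = 0) : x = 0 := by
  have hcubic_star : x * (1 + x) * (1 + 2 * x) = 0 := by
    have : -((1 + x * 2) * ((1 + x) * x)) = 0 := by
      simpa [hstar] using congrArg star hcubic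
    rw [← neg_eq_zero, ← this]
    noncomm_ring
  have hsq : x * x = 0 := by
    rw [← (h2.mul h3).mul_left_eq_zero_iff]
    calc 2 * 3 * (x * x) = x * (1 + x) * (1 + 2 * x) - x * (1 - x) * (1 - 2 * x) := by
          noncomm_ring
      _ = 0 := by rw [hcubic, hcubic_star, sub_zero]
  calc x = x * (1 - x) * (1 - 2 * x) + 3 * (x * x) - 2 * (x * x) * x := by noncomm_ring
    _ = 0 := by simp [hcubic, hsq]

theorem cubic_eq_zero_of_mul_star_eq_one_sub (h3 : IsLeftRegular (3 : E)) {a b x : E}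
    (hcenter : ∀ c, Commute x c) (hx : x = star b * a - star a * b)
    (hab : a * star b = 1 - x) : x * (1 - x) * (1 - 2 * x) = 0 := by
  have hba : b * star a = 1 + x := by
    have hstar : star x = -x := by simp [hx]
    simpa [hstar] using congrArg star hab
  have hbb : star a * b * star b = star b * (1 - 2 * x) := by
    calc star a * b * star b = star b * (a * star b) - x * star b := by rw [hx]; noncomm_ring
      _ = star b * (1 - 2 * x) := by rw [hab, (hcenter _).eq]; noncomm_ring
  have hxbb : x * (b * star b) = 0 := by
    have : b * star b - 2 * (x * (b * star b)) = b * star b + x * (b * star b) := by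
      calc b * star b - 2 * (x * (b * star b)) = b * (star b * (1 - 2 * x)) := by
            rw [(hcenter _).eq]; noncomm_ring
        _ = b * star a * (b * star b) := by rw [← hbb]; noncomm_ring
        _ = b * star b + x * (b * star b) := by rw [hba]; noncomm_ring
    rw [← h3.mul_left_eq_zero_iff, ← sub_eq_zero.mpr this.symm]
    noncomm_ring
  calc x * (1 - x) * (1 - 2 * x) = x * (a * star a) * (b * star b) := by
        rw [← hab, mul_assoc, mul_assoc a, ← hbb]; noncomm_ring
    _ = a * star a * (x * (b * star b)) := by rw [(hcenter _).eq, mul_assoc]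
    _ = 0 := by rw [hxbb, mul_zero]

theorem mul_star_eq_one_of_forall_triple (h2 : IsLeftRegular (2 : E)) (h3 : IsLeftRegular (3 : E))
    {a b : E} (htriple : ∀ c, a * star b * c + c * star b * a - c * star a * b = c) :
    a * star b = 1 := by
  obtain ⟨x, hx⟩ : ∃ x, x = star b * a - star a * b := ⟨_, rfl⟩
  have htriple' (c : E) : a * star b * c = c - c * x := by
    rw [eq_sub_iff_add_eq, hx]
    calc a * star b * c + c * (star b * a - star a * b)
        = a * star b * c + c * star b * a - c * star a * b := by noncomm_ring
      _ = c := htriple c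
  have hab : a * star b = 1 - x := by simpa using htriple' 1
  have hcenter (c : E) : Commute x c := by
    have := htriple' c
    rwa [hab, sub_mul, one_mul, sub_right_inj] at this
  have hstar : star x = -x := by simp [hx]
  have hcubic := cubic_eq_zero_of_mul_star_eq_one_sub h3 hcenter hx hab
  rw [hab, eq_zero_of_star_eq_neg_of_cubic_eq_zero h2 h3 hstar hcubic, sub_zero]

theorem isUnit_of_forall_ne_zero_exists_mul_star_eq_one
    (hright : ∀ a : E, a ≠ 0 → ∃ b, a * star b = 1) {a : E} (ha : a ≠ 0) : IsUnit a := by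
  obtain ⟨b, hb⟩ := hright a ha
  obtain ⟨c, hc⟩ := hright (star a) (star_ne_zero.mpr ha)
  have hca : c * a = 1 := by simpa using congrArg star hc
  exact isUnit_iff_exists_and_exists.mpr ⟨⟨star b, hb⟩, c, hca⟩

end StarRing

section HermitianForm

variable {E : Type*} [Ring E] [StarRing E] {W : Type*} [AddCommGroup W] [Module E W]

/-- A hermitian form on a left module over a star ring, linear in the first variable. Additivity and
conjugate linearity in the second variable are consequences of `star_apply`. -/
structure IsHermitianForm (h : W → W → E) : Prop where
  add_left : ∀ u v w, h (u + v) w = h u w + h v w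
  smul_left : ∀ (a : E) v w, h (a • v) w = a * h v w
  star_apply : ∀ v w, star (h v w) = h w v

/-- `b` is a conjugate inverse of `a` in the hermitian structurable algebra of `h`: the operator
`V_{a,b}` is the identity. -/
def IsConjInverse (h : W → W → E) (a b : E × W) : Prop :=
  ∀ z, hermTrip star h a b z = z

/-- The `E`-valued norm `q(a, u) = a ā - h(u, u)` on the hermitian structurable algebra of `h`;
elements whose norm is a unit are conjugate invertible. -/
def hermNorm (h : W → W → E) (a : E × W) : E :=
  a.1 * star a.1 - h a.2 a.2

namespace IsHermitianForm

variable {h : W → W → E} (hh : IsHermitianForm h)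
include hh

theorem add_right (u v w : W) : h u (v + w) = h u v + h u w := by
  rw [← hh.star_apply, hh.add_left, star_add, hh.star_apply, hh.star_apply]

theorem smul_right (a : E) (v w : W) : h v (a • w) = h v w * star a := by
  rw [← hh.star_apply, hh.smul_left, star_mul, hh.star_apply]

theorem zero_left (w : W) : h 0 w = 0 := by
  simpa using hh.smul_left 0 0 w

theorem zero_right (v : W) : h v 0 = 0 := by
  simpa using hh.smul_right 0 v 0

theorem neg_right (v w : W) : h v (-w) = -h v w := by
  simpa using hh.smul_right (-1) v w

theorem isSelfAdjoint_hermNorm (a : E × W) : IsSelfAdjoint (hermNorm h a) := by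
  simp [IsSelfAdjoint, hermNorm, hh.star_apply]

theorem hermTrip_mk (a b c : E) (u v w : W) :
    hermTrip star h (a, u) (b, v) (c, w) =
      (a * star b * c + c * star b * a - c * star a * b + h u v * c
          + h w (star b • u + star a • v),
        c • (star b • u + star a • v) + (h u v + a * star b) • w + h w v • u - h w u • v) := by
  ext
  · simp only [hermTrip, hermMul, hermInv, Prod.fst_add, Prod.fst_sub, star_add, star_mul,
      star_star, hh.add_right, hh.smul_right, hh.star_apply, add_mul]
    noncomm_ring
  · simp only [hermTrip, hermMul, hermInv, Prod.snd_add, Prod.snd_sub, star_add, star_mul,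
      star_star, hh.star_apply, add_smul, smul_add, mul_smul]
    abel

theorem isConjInverse_iff (a b : E) (u v : W) :
    IsConjInverse h (a, u) (b, v) ↔
      (∀ c, a * star b * c + c * star b * a - c * star a * b + h u v * c = c) ∧
      star b • u + star a • v = 0 ∧
      ∀ w, (h u v + a * star b) • w + h w v • u - h w u • v = w := by
  constructor
  · intro hinv
    refine ⟨fun c ↦ ?_, ?_, fun w ↦ ?_⟩
    · simpa [hh.hermTrip_mk, hh.zero_left] using congrArg Prod.fst (hinv (c, 0))
    · simpa [hh.hermTrip_mk, hh.zero_left] using congrArg Prod.snd (hinv (1, 0))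
    · simpa [hh.hermTrip_mk] using congrArg Prod.snd (hinv (0, w))
  · rintro ⟨hE, hEW, hW⟩ ⟨c, w⟩
    rw [hh.hermTrip_mk, hEW, hE, hh.zero_right, add_zero, smul_zero, zero_add, hW]

theorem mul_star_eq_one_of_isConjInverse (h2 : IsLeftRegular (2 : E))
    (h3 : IsLeftRegular (3 : E)) {a b : E} {v : W} (hinv : IsConjInverse h (a, 0) (b, v)) :
    a * star b = 1 := by
  have htriple := ((hh.isConjInverse_iff a b 0 v).mp hinv).1
  simp only [hh.zero_left, zero_mul, add_zero] at htriple
  exact mul_star_eq_one_of_forall_triple h2 h3 htriple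

theorem apply_self_ne_zero_of_isConjInverse {b : E} {u v : W} (hu : u ≠ 0)
    (hinv : IsConjInverse h (0, u) (b, v)) : h u u ≠ 0 := by
  intro huu
  obtain ⟨hE, -, hW⟩ := (hh.isConjInverse_iff 0 b u v).mp hinv
  have huv : h u v = 1 := by simpa using hE 1
  exact hu (by simpa [huu, huv] using hW u)

theorem apply_self_ne_one_of_isConjInverse (h2 : IsLeftRegular (2 : E)) {b : E} {u v : W}
    (hu : u ≠ 0) (hinv : IsConjInverse h (1, u) (b, v)) : h u u ≠ 1 := by
  intro huu
  obtain ⟨hE, hEW, -⟩ := (hh.isConjInverse_iff 1 b u v).mp hinv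
  have hv : v = -(star b • u) := by
    rw [star_one, one_smul, add_comm] at hEW
    exact eq_neg_of_add_eq_zero_left hEW
  have huv : h u v = -b := by simp [hv, hh.neg_right, hh.smul_right, huu]
  have hb : 2 * (star b - b) = 1 := by
    rw [← hE 1, huv, star_one]
    noncomm_ring
  have hb_star : 2 * (b - star b) = 1 := by
    calc 2 * (b - star b) = star (2 * (star b - b)) := by simp [two_mul]
      _ = 1 := by rw [hb, star_one]
  have hone : (1 : E) = 0 := by
    rw [← h2.mul_left_eq_zero_iff]
    calc 2 * (1 : E) = 2 * (star b - b) + 2 * (b - star b) := by rw [hb, hb_star, two_mul]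
      _ = 0 := by noncomm_ring
  exact hu (by rw [← one_smul E u, hone, zero_smul])

theorem isConjInverse_of_hermNorm_eq (n : Eˣ) {a : E} {u : W} (hn : hermNorm h (a, u) = n) :
    IsConjInverse h (a, u) (↑n⁻¹ * a, -((↑n⁻¹ : E) • u)) := by
  have hstar : star (↑n⁻¹ : E) = ↑n⁻¹ := by
    have : star n = n := Units.ext (by rw [Units.coe_star, ← hn, hh.isSelfAdjoint_hermNorm _])
    rw [← Units.coe_star_inv, this]
  have hone : h u (-((↑n⁻¹ : E) • u)) + a * star (↑n⁻¹ * a) = 1 := by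
    calc h u (-((↑n⁻¹ : E) • u)) + a * star (↑n⁻¹ * a) = hermNorm h (a, u) * ↑n⁻¹ := by
          rw [hh.neg_right, hh.smul_right, star_mul, hstar, hermNorm]
          noncomm_ring
      _ = 1 := by rw [hn, n.mul_inv]
  rw [hh.isConjInverse_iff]
  refine ⟨fun c ↦ ?_, ?_, fun w ↦ ?_⟩
  · calc _ = (h u (-((↑n⁻¹ : E) • u)) + a * star (↑n⁻¹ * a)) * c
          + (c * star (↑n⁻¹ * a) * a - c * star a * (↑n⁻¹ * a)) := by noncomm_ring
      _ = c := by rw [hone, star_mul, hstar]; noncomm_ring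
  · rw [star_mul, hstar, mul_smul, smul_neg, add_neg_cancel]
  · rw [hone, hh.neg_right, hh.smul_right, hstar, one_smul, neg_smul, smul_neg, mul_smul]
    abel

theorem apply_inv_smul_self (a : Eˣ) {u : W} (hu : h u u = a * star (a : E)) :
    h ((↑a⁻¹ : E) • u) ((↑a⁻¹ : E) • u) = 1 := by
  rw [hh.smul_left, hh.smul_right, hu, ← Units.coe_star, ← Units.coe_star_inv, mul_assoc,
    Units.mul_inv, mul_one, Units.inv_mul]

theorem hermNorm_ne_zero (hE : ∀ e : E, e ≠ 0 → IsUnit e)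
    (hW : ∀ w : W, w ≠ 0 → h w w ≠ 0 ∧ h w w ≠ 1) {a : E × W} (ha : a ≠ 0) :
    hermNorm h a ≠ 0 := by
  obtain ⟨a, u⟩ := a
  intro hnorm
  have huu : h u u = a * star a := (sub_eq_zero.mp hnorm).symm
  by_cases ha0 : a = 0
  · have hu : u ≠ 0 := by simpa [ha0] using ha
    exact (hW u hu).1 (by simpa [ha0] using huu)
  · obtain ⟨a, rfl⟩ := hE a ha0
    have hone := hh.apply_inv_smul_self a huu
    refine (hW _ fun hzero ↦ ha0 ?_).2 hone
    have : (1 : E) = 0 := by rw [← hone, hzero, hh.zero_left]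
    exact eq_zero_of_zero_eq_one this.symm _

end IsHermitianForm

theorem stmt13_general (h2 : IsLeftRegular (2 : E)) (h3 : IsLeftRegular (3 : E))
    {h : W → W → E} (hh : IsHermitianForm h) :
    (∀ a : E × W, a ≠ 0 → ∃ b, IsConjInverse h a b) ↔
      (∀ e : E, e ≠ 0 → IsUnit e) ∧ ∀ w : W, w ≠ 0 → h w w ≠ 0 ∧ h w w ≠ 1 := by
  constructor
  · intro hinv
    refine ⟨fun e ↦ isUnit_of_forall_ne_zero_exists_mul_star_eq_one fun a ha ↦ ?_,
      fun u hu ↦ ⟨?_, ?_⟩⟩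
    · obtain ⟨⟨b, v⟩, hb⟩ := hinv (a, 0) (by simpa using ha)
      exact ⟨b, hh.mul_star_eq_one_of_isConjInverse h2 h3 hb⟩
    · obtain ⟨_, hb⟩ := hinv (0, u) (by simpa using hu)
      exact hh.apply_self_ne_zero_of_isConjInverse hu hb
    · obtain ⟨_, hb⟩ := hinv (1, u) (by simp [hu])
      exact hh.apply_self_ne_one_of_isConjInverse h2 hu hb
  · rintro ⟨hE, hW⟩ a ha
    obtain ⟨n, hn⟩ := hE _ (hh.hermNorm_ne_zero hE hW ha)
    exact ⟨_, hh.isConjInverse_of_hermNorm_eq n hn.symm⟩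

end HermitianForm

theorem isLeftRegular_ofNat_of_algebra (k : Type*) [Field k] {E : Type*} [Ring E] [Algebra k E]
    (n : ℕ) [n.AtLeastTwo] (hn : (ofNat(n) : k) ≠ 0) : IsLeftRegular (ofNat(n) : E) := by
  rw [← map_ofNat (algebraMap k E) n]
  exact (hn.isUnit.map (algebraMap k E)).isRegular.left

/-- Let `k` be a field with `char k ≠ 2, 3`, `E` a finite-dimensional
unital associative `k`-algebra with `k`-linear involution `barE`, `W` a finite-dimensional
unital left `E`-module, and `h : W × W → E` a hermitian form.  Then the hermitian
structurable algebra `A := E ⊕ W` is a structurable division algebra (every nonzero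
element is conjugate invertible) if and only if `E` is a division algebra and
`h(w,w) ≠ 0, 1` for every `0 ≠ w ∈ W`. -/
theorem stmt13 {k : Type*} [Field k] (h2 : (2 : k) ≠ 0) (h3 : (3 : k) ≠ 0)
    {E : Type*} [Ring E] [Algebra k E] [FiniteDimensional k E]
    {W : Type*} [AddCommGroup W] [Module E W] [Module k W] [IsScalarTower k E W]
    [FiniteDimensional k W]
    (barE : E → E)
    (hbadd : ∀ a b : E, barE (a + b) = barE a + barE b)
    (hbsmul : ∀ (c : k) (a : E), barE (c • a) = c • barE a)
    (hbmul : ∀ a b : E, barE (a * b) = barE b * barE a)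
    (hbinv : ∀ a : E, barE (barE a) = a)
    (h : W → W → E)
    (haddl : ∀ v v' w : W, h (v + v') w = h v w + h v' w)
    (haddr : ∀ v w w' : W, h v (w + w') = h v w + h v w')
    (hsesql : ∀ (a : E) (v w : W), h (a • v) w = a * h v w)
    (hsesqr : ∀ (a : E) (v w : W), h v (a • w) = h v w * barE a)
    (hherm : ∀ v w : W, barE (h v w) = h w v) :
    (∀ a : E × W, a ≠ 0 → ∃ b : E × W, ∀ z : E × W, hermTrip barE h a b z = z)
      ↔ ((∀ e : E, e ≠ 0 → IsUnit e) ∧ ∀ w : W, w ≠ 0 → h w w ≠ 0 ∧ h w w ≠ 1) := by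
  let _ : StarRing E :=
    { star := barE, star_involutive := hbinv, star_mul := hbmul, star_add := hbadd }
  exact stmt13_general (isLeftRegular_ofNat_of_algebra k 2 h2)
    (isLeftRegular_ofNat_of_algebra k 3 h3) ⟨haddl, hsesql, hherm⟩
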